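/- arXiv:1008.1489 — 3 statements merged into one kernel-verified Lean document; each statement's English description precedes it below -/
import Mathlib

section
/- Let A be an abelian category and let x be an object of the bounded derived category D^b(A) (i.e. an object of the derived category of A whose cohomology objects H^i(x) vanish for all but finitely many i). Let u : x → x⟦2⟧ be a morphism and n an integer. For i ≥ 0 denote by u^i : H^{n-i}(x) → H^{n+i}(x) the map induced on cohomology by the i-fold composite of u (taking the appropriate shifts of u). If u^i : H^{n-i}(x) → H^{n+i}(x) is an isomorphism for every i ≥ 0, then x is isomorphic in D^b(A) to the finite direct sum ⊕_i H^i(x)⟦-i⟧, where each cohomology object H^i(x) is regarded as a complex concentrated in degree 0. -/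
/-!
Deligne's decomposition criterion (Theorem 3.2 of the paper):
if `u : x ⟶ x⟦2⟧` induces isomorphisms `u^i : H^{n-i}(x) ≅ H^{n+i}(x)` for all `i ≥ 0`,
then `x` decomposes as the direct sum of its (shifted) cohomology objects.
-/

open CategoryTheory CategoryTheory.Limits DerivedCategory

universe w v u

variable {A : Type u} [Category.{v} A] [Abelian A] [HasDerivedCategory.{w} A]

/-- The map `H^m(x) ⟶ H^{m + 2i}(x)` induced on cohomology by the `i`-fold composite of
`u : x ⟶ x⟦2⟧` (taking the appropriate shifts of `u`). -/
noncomputable def homologyPow {x : DerivedCategory A} (u : x ⟶ x⟦(2 : ℤ)⟧) :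
    (i : ℕ) → (m : ℤ) →
      ((homologyFunctor A m).obj x ⟶ (homologyFunctor A (m + 2 * i)).obj x)
  | 0, m => eqToHom (congrArg (fun t => (homologyFunctor A t).obj x)
      (show m = m + 2 * ((0 : ℕ) : ℤ) by push_cast; ring))
  | (i + 1), m =>
      (homologyFunctor A 0).shiftMap u m (m + 2) (by ring) ≫ homologyPow u i (m + 2) ≫
        eqToHom (congrArg (fun t => (homologyFunctor A t).obj x)
          (show m + 2 + 2 * (i : ℤ) = m + 2 * ((i + 1 : ℕ) : ℤ) by push_cast; ring))

open CategoryTheory CategoryTheory.Limits DerivedCategory Pretriangulated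

section helpers

/-- `s` has cohomology only in degree `k`. -/
def Conc (k : ℤ) (s : DerivedCategory A) : Prop :=
  ∀ j, j ≠ k → IsZero ((homologyFunctor A j).obj s)

lemma isIso_of_isZero {C : Type*} [Category* C] [HasZeroMorphisms C] {X Y : C} (f : X ⟶ Y) (hX : IsZero X) (hY : IsZero Y) : IsIso f :=
  ⟨0, hX.eq_of_src _ _, hY.eq_of_src _ _⟩

lemma Conc.isIso {k : ℤ} {s t : DerivedCategory A} (hs : Conc k s) (ht : Conc k t) (f : s ⟶ t)
    (hf : IsIso ((homologyFunctor A k).map f)) : IsIso f := by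
  rw [isIso_iff]
  intro j
  by_cases h : j = k
  · subst h; exact hf
  · exact isIso_of_isZero _ (hs j h) (ht j h)

lemma isZero_shift (s : DerivedCategory A) (m j k : ℤ) (h : m + j = k)
    (hs : IsZero ((homologyFunctor A k).obj s)) :
    IsZero ((homologyFunctor A j).obj (s⟦m⟧)) :=
  hs.of_iso (((homologyFunctor A 0).shiftIso m j k h).app s)

lemma Conc.shift {k : ℤ} {s : DerivedCategory A} (hs : Conc k s) (m l : ℤ) (h : m + l = k) :
    Conc l (s⟦m⟧) := by
  intro j hj
  exact isZero_shift s m j (m + j) rfl (hs _ (by omega))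

lemma bottom_aux (T : Triangle (DerivedCategory A)) (hT : T ∈ distTriang _) (m : ℤ)
    (h1 : T.obj₁.IsLE m) (h3 : T.obj₃.IsGE (m + 1))
    (hx : ∀ j < m, IsZero ((homologyFunctor A j).obj T.obj₂)) :
    Conc m T.obj₁ ∧ IsIso ((homologyFunctor A m).map T.mor₁) := by
  rw [isLE_iff] at h1
  rw [isGE_iff] at h3
  refine ⟨?_, ?_⟩
  · intro j hj
    rcases lt_or_gt_of_ne hj with h | h
    · exact (HomologySequence.exact₁ T hT (j - 1) j (by omega)).isZero_of_both_zeros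
        ((h3 _ (by omega)).eq_of_src _ _) ((hx j h).eq_of_tgt _ _)
    · exact h1 j (by omega)
  · have : Mono ((homologyFunctor A m).map T.mor₁) := by
      rw [HomologySequence.mono_homologyMap_mor₁_iff T hT (m - 1) m (by omega)]
      exact (h3 _ (by omega)).eq_of_src _ _
    have : Epi ((homologyFunctor A m).map T.mor₁) := by
      rw [HomologySequence.epi_homologyMap_mor₁_iff T hT m]
      exact (h3 _ (by omega)).eq_of_tgt _ _
    exact isIso_of_mono_of_epi _

lemma exists_bottom (x : DerivedCategory A) (m : ℤ)
    (hx : ∀ j < m, IsZero ((homologyFunctor A j).obj x)) :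
    ∃ (s : DerivedCategory A) (f : s ⟶ x), Conc m s ∧ IsIso ((homologyFunctor A m).map f) := by
  have h1 : IsLE ((TStructure.t.triangleLTGE (m + 1)).obj x).obj₁ m := by
    have : IsLE ((TStructure.t.triangleLTGE (m + 1)).obj x).obj₁ (m + 1 - 1) := inferInstance
    simpa only [add_sub_cancel_right] using this
  have h := bottom_aux _ (TStructure.t.triangleLTGE_distinguished (m + 1) x) m h1 inferInstance hx
  exact ⟨_, _, h⟩

lemma top_aux (T : Triangle (DerivedCategory A)) (hT : T ∈ distTriang _) (m : ℤ)
    (h1 : T.obj₁.IsLE (m - 1)) (h3 : T.obj₃.IsGE m)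
    (hx : ∀ j > m, IsZero ((homologyFunctor A j).obj T.obj₂)) :
    Conc m T.obj₃ ∧ IsIso ((homologyFunctor A m).map T.mor₂) := by
  rw [isLE_iff] at h1
  rw [isGE_iff] at h3
  refine ⟨?_, ?_⟩
  · intro j hj
    rcases lt_or_gt_of_ne hj with h | h
    · exact h3 j (by omega)
    · exact (HomologySequence.exact₃ T hT j (j + 1) (by omega)).isZero_of_both_zeros
        ((hx j h).eq_of_src _ _) ((h1 _ (by omega)).eq_of_tgt _ _)
  · have : Mono ((homologyFunctor A m).map T.mor₂) := by
      rw [HomologySequence.mono_homologyMap_mor₂_iff T hT m]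
      exact (h1 _ (by omega)).eq_of_src _ _
    have : Epi ((homologyFunctor A m).map T.mor₂) := by
      rw [HomologySequence.epi_homologyMap_mor₂_iff T hT m (m + 1) (by omega)]
      exact (h1 _ (by omega)).eq_of_tgt _ _
    exact isIso_of_mono_of_epi _

lemma exists_top (x : DerivedCategory A) (m : ℤ)
    (hx : ∀ j > m, IsZero ((homologyFunctor A j).obj x)) :
    ∃ (s : DerivedCategory A) (f : x ⟶ s), Conc m s ∧ IsIso ((homologyFunctor A m).map f) := by
  have h := top_aux _ (TStructure.t.triangleLTGE_distinguished m x) m inferInstance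
    inferInstance hx
  exact ⟨_, _, h⟩

/-- Splitting off a direct summand. -/
lemma exists_split {s s' x : DerivedCategory A} (f : s ⟶ x) (r : x ⟶ s') (h : IsIso (f ≫ r)) :
    ∃ (x' : DerivedCategory A) (i : x' ⟶ x) (p : x ⟶ x'), i ≫ p = 𝟙 x' ∧
      (∀ j, IsZero ((homologyFunctor A j).obj s) → IsIso ((homologyFunctor A j).map i)) ∧
      (∀ j, IsIso ((homologyFunctor A j).map f) → IsZero ((homologyFunctor A j).obj x')) := by
  obtain ⟨x', i, d, hT⟩ := distinguished_cocone_triangle₁ r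
  have hir : i ≫ r = 0 := comp_distTriang_mor_zero₁₂ _ hT
  have hr : Epi r := epi_of_epi f r
  have hi : Mono i := Triangle.mono₁ _ hT (Triangle.mor₃_eq_zero_of_epi₂ _ hT hr)
  obtain ⟨p, hp⟩ : ∃ p : x ⟶ x', 𝟙 x - r ≫ inv (f ≫ r) ≫ f = p ≫ i := Triangle.coyoneda_exact₂ _ hT (𝟙 x - r ≫ inv (f ≫ r) ≫ f) (by
    change (𝟙 x - r ≫ inv (f ≫ r) ≫ f) ≫ r = 0
    simp)
  have hip : i ≫ p = 𝟙 x' := by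
    rw [← cancel_mono i, Category.assoc, ← hp]
    simp [reassoc_of% hir]
  refine ⟨x', i, p, hip, fun j hj => ?_, fun j hj => ?_⟩
  · refine ⟨(homologyFunctor A j).map p, ?_, ?_⟩
    · rw [← Functor.map_comp, hip, CategoryTheory.Functor.map_id]
    · rw [← Functor.map_comp, ← hp, Functor.map_sub, Functor.map_comp, Functor.map_comp,
        hj.eq_of_src ((homologyFunctor A j).map f) 0]
      simp
  · have h1 : IsIso ((homologyFunctor A j).map f ≫ (homologyFunctor A j).map r) := by
      rw [← Functor.map_comp]; infer_instance
    have h2 : IsIso ((homologyFunctor A j).map r) := IsIso.of_isIso_comp_left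
      ((homologyFunctor A j).map f) _
    have h3 : (homologyFunctor A j).map i = 0 := by
      rw [← cancel_mono ((homologyFunctor A j).map r), ← Functor.map_comp, hir]
      simp
    rw [IsZero.iff_id_eq_zero, ← CategoryTheory.Functor.map_id, ← hip, Functor.map_comp, h3, zero_comp]

lemma isZero_of_retract {x x' : DerivedCategory A} (i : x' ⟶ x) (p : x ⟶ x') (h : i ≫ p = 𝟙 x')
    (j : ℤ) (hj : IsZero ((homologyFunctor A j).obj x)) :
    IsZero ((homologyFunctor A j).obj x') := by
  rw [IsZero.iff_id_eq_zero, ← CategoryTheory.Functor.map_id, ← h, Functor.map_comp, hj.eq_of_tgt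
    ((homologyFunctor A j).map i) 0, zero_comp]

lemma isIso_of_retract {x x' : DerivedCategory A} (i : x' ⟶ x) (p : x ⟶ x') (h : i ≫ p = 𝟙 x')
    (j : ℤ) (hj : IsIso ((homologyFunctor A j).map i)) :
    IsIso ((homologyFunctor A j).map p) := by
  have : IsIso ((homologyFunctor A j).map i ≫ (homologyFunctor A j).map p) := by
    rw [← Functor.map_comp, h]; infer_instance
  exact IsIso.of_isIso_comp_left ((homologyFunctor A j).map i) _

lemma isIso_of_shiftMap {x y : DerivedCategory A} {m : ℤ} (f : x ⟶ y⟦m⟧) (a a' : ℤ)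
    (h : m + a = a') (hf : IsIso ((homologyFunctor A 0).shiftMap f a a' h)) :
    IsIso ((homologyFunctor A a).map f) := by
  have : IsIso (((homologyFunctor A 0).shift a).map f ≫
    (((homologyFunctor A 0).shiftIso m a a' h).app y).hom) := hf
  have : IsIso (((homologyFunctor A 0).shift a).map f) :=
    IsIso.of_isIso_comp_right _ (((homologyFunctor A 0).shiftIso m a a' h).app y).hom
  exact this

lemma isIso_shift {x y : DerivedCategory A} (m : ℤ) (f : x ⟶ y) (a a' : ℤ)
    (h : m + a = a') (hf : IsIso ((homologyFunctor A a').map f)) :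
    IsIso ((homologyFunctor A a).map (f⟦m⟧')) := by
  have hf' : IsIso (((homologyFunctor A 0).shift a').map f) := hf
  have := (NatIso.isIso_map_iff ((homologyFunctor A 0).shiftIso m a a' h) f).2 hf'
  exact this

lemma main_induction (n : ℤ) (N : ℕ) : ∀ (x : DerivedCategory A)
    (_ : ∀ j, (j ≤ n - N ∨ n + N ≤ j) → IsZero ((homologyFunctor A j).obj x))
    (_ : ∀ i : ℕ, i < N → ∃ v : x ⟶ x⟦(2 * i : ℤ)⟧,
      IsIso ((homologyFunctor A (n - i)).map v)) (j : ℤ),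
    ∃ (s : DerivedCategory A) (f : s ⟶ x), Conc j s ∧ IsIso ((homologyFunctor A j).map f) := by
  induction N with
  | zero =>
    intro x hx _ j
    exact exists_bottom x j (fun k _ => hx k (by push_cast; omega))
  | succ N ih =>
    intro x hx hv j
    push_cast at hx
    obtain ⟨s, α, hs, hα⟩ := exists_bottom x (n - N) (fun k hk => hx k (by omega))
    by_cases hj1 : j = n - N
    · subst hj1; exact ⟨s, α, hs, hα⟩
    by_cases hj0 : j < n - N
    · exact exists_bottom x j (fun k hk => hx k (by omega))
    have hN : 0 < N ∨ n + N < j := by omega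
    by_cases hj2 : n + N < j
    · obtain ⟨z, hz⟩ := HasZeroObject.zero (C := DerivedCategory A)
      refine ⟨z, 0, ?_, ?_⟩
      · intro k _
        exact (homologyFunctor A k).map_isZero hz
      · exact isIso_of_isZero _ ((homologyFunctor A j).map_isZero hz) (hx j (by omega))
    obtain ⟨t, p, ht, hp⟩ := exists_top x (n + N) (fun k hk => hx k (by omega))
    obtain ⟨v, hv0⟩ := hv N (by omega)
    let β : s⟦(-(2 * N) : ℤ)⟧ ⟶ x := (α ≫ v)⟦(-(2 * N) : ℤ)⟧' ≫
      (shiftFunctorCompIsoId (DerivedCategory A) (2 * N : ℤ) (-(2 * N)) (by ring)).hom.app x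
    have hβ : IsIso ((homologyFunctor A (n + N)).map β) := by
      have h1 : IsIso ((homologyFunctor A (n - N)).map (α ≫ v)) := by
        rw [Functor.map_comp]; infer_instance
      have h2 := isIso_shift (-(2 * N) : ℤ) (α ≫ v) (n + N) (n - N) (by ring) h1
      rw [Functor.map_comp]
      infer_instance
    clear_value β
    have hs' : Conc (n + N) (s⟦(-(2 * N) : ℤ)⟧) := hs.shift _ _ (by ring)
    by_cases hj3 : j = n + N
    · subst hj3
      exact ⟨_, β, hs', hβ⟩
    have hc1 : IsIso (α ≫ v ≫ p⟦(2 * N : ℤ)⟧') := by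
      refine hs.isIso (ht.shift _ _ (by ring)) _ ?_
      rw [Functor.map_comp, Functor.map_comp]
      have := isIso_shift (2 * N : ℤ) p (n - N) (n + N) (by ring) hp
      infer_instance
    obtain ⟨x1, i1, p1, hip1, hiso1, hzero1⟩ := exists_split _ _ hc1
    have hi1 : IsIso ((homologyFunctor A (n + N)).map i1) := hiso1 _ (hs _ (by omega))
    have hp1 := isIso_of_retract i1 p1 hip1 _ hi1
    have hc2 : IsIso ((β ≫ p1) ≫ (i1 ≫ p)) := by
      refine hs'.isIso ht _ ?_
      rw [Functor.map_comp, Functor.map_comp, Functor.map_comp]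
      infer_instance
    obtain ⟨x2, i2, p2, hip2, hiso2, hzero2⟩ := exists_split _ _ hc2
    have hip : (i2 ≫ i1) ≫ (p1 ≫ p2) = 𝟙 x2 := by
      simp [reassoc_of% hip1, hip2]
    have hiso : ∀ k, k ≠ n - N → k ≠ n + N → IsIso ((homologyFunctor A k).map (i2 ≫ i1)) := by
      intro k h1 h2
      have := hiso1 k (hs k h1)
      have := hiso2 k (hs' k h2)
      rw [Functor.map_comp]
      infer_instance
    obtain ⟨s2, f2, hs2, hf2⟩ := ih x2 (by
      intro k hk
      by_cases h1 : k = n - N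
      · subst h1
        exact isZero_of_retract i2 p2 hip2 _ (hzero1 _ hα)
      by_cases h2 : k = n + N
      · subst h2
        refine hzero2 _ ?_
        rw [Functor.map_comp]
        infer_instance
      exact isZero_of_retract _ _ hip k (hx k (by omega))) (by
      intro i hi
      obtain ⟨w, hw⟩ := hv i (by omega)
      refine ⟨(i2 ≫ i1) ≫ w ≫ (p1 ≫ p2)⟦(2 * i : ℤ)⟧', ?_⟩
      rw [(homologyFunctor A (n - i)).map_comp (i2 ≫ i1), (homologyFunctor A (n - i)).map_comp w]
      have a1 := hiso (n - i) (by omega) (by omega)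
      have a2 := isIso_shift (2 * i : ℤ) (p1 ≫ p2) (n - i) (n + i) (by ring)
        (isIso_of_retract _ _ hip _ (hiso _ (by omega) (by omega)))
      infer_instance) j
    refine ⟨s2, f2 ≫ i2 ≫ i1, hs2, ?_⟩
    rw [Functor.map_comp]
    have := hiso j hj1 hj3
    infer_instance

lemma shiftMap_congr {x : DerivedCategory A} {m : ℤ} (v : x ⟶ x⟦m⟧) (a a' a'' : ℤ)
    (h : m + a = a') (h' : a' = a'') :
    (homologyFunctor A 0).shiftMap v a a' h ≫
      eqToHom (congrArg (fun t => ((homologyFunctor A 0).shift t).obj x) h') =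
    (homologyFunctor A 0).shiftMap v a a'' (h.trans h') := by
  subst h'
  simp

lemma shiftMap_zero' {x : DerivedCategory A} (k : ℤ) (hk : k = 0) (m m' : ℤ) (h : k + m = m') :
    (homologyFunctor A 0).shiftMap ((shiftFunctorZero' (DerivedCategory A) k hk).inv.app x)
      m m' h = eqToHom (congrArg (fun t => ((homologyFunctor A 0).shift t).obj x)
        (show m = m' by omega)) := by
  subst hk
  obtain rfl : m = m' := by omega
  simp [Functor.shiftMap, shiftFunctorZero', ← Functor.map_comp]

lemma shiftMap_add {x : DerivedCategory A} {k l kl : ℤ} (u : x ⟶ x⟦l⟧) (v : x ⟶ x⟦k⟧)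
    (h : k + l = kl) (m m' m'' : ℤ) (h' : l + m = m') (h'' : k + m' = m'') :
    (homologyFunctor A 0).shiftMap (u ≫ v⟦l⟧' ≫
      (shiftFunctorAdd' (DerivedCategory A) k l kl h).inv.app x) m m'' (by omega) =
    (homologyFunctor A 0).shiftMap u m m' h' ≫ (homologyFunctor A 0).shiftMap v m' m'' h'' := by
  rw [Functor.shiftMap_comp']
  rw [show (homologyFunctor A 0).shiftMap u m m' h' =
    ((homologyFunctor A 0).shift m).map u ≫ ((homologyFunctor A 0).shiftIso _ _ _ h').hom.app x
    from rfl, Category.assoc,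
    (homologyFunctor A 0).shiftIso_hom_app_comp_shiftMap v l kl h m m' m'' h' h'']
  simp [Functor.shiftMap]

lemma exists_pow {x : DerivedCategory A} (u : x ⟶ x⟦(2 : ℤ)⟧) (i : ℕ) :
    ∃ v : x ⟶ x⟦(2 * i : ℤ)⟧, ∀ m : ℤ,
      (homologyFunctor A 0).shiftMap v m (m + 2 * i) (by ring) = homologyPow u i m := by
  induction i with
  | zero =>
    exact ⟨(shiftFunctorZero' _ (2 * ((0 : ℕ) : ℤ)) (by simp)).inv.app x, fun m =>
      shiftMap_zero' _ _ _ _ _⟩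
  | succ i ih =>
    obtain ⟨v, hv⟩ := ih
    refine ⟨u ≫ v⟦(2 : ℤ)⟧' ≫ (shiftFunctorAdd' _ (2 * i : ℤ) 2 (2 * (i + 1 : ℕ) : ℤ)
      (by push_cast; ring)).inv.app x, fun m => ?_⟩
    rw [homologyPow, ← hv]
    refine (shiftMap_add u v _ m (m + 2) _ (by ring) (by push_cast; ring)).trans ?_
    congr 1
    exact (shiftMap_congr v (m + 2) (m + 2 + 2 * i) (m + 2 * (i + 1 : ℕ)) (by ring)
      (by push_cast; ring)).symm

lemma conc_single (M : A) (k : ℤ) : Conc k ((singleFunctor A k).obj M) := by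
  intro j hj
  rcases lt_or_gt_of_ne hj with h | h
  · exact isZero_of_isGE _ k j h
  · exact isZero_of_isLE _ k j h

lemma Conc.nonempty_iso {k : ℤ} {s : DerivedCategory A} (hs : Conc k s) (M : A)
    (e : (homologyFunctor A k).obj s ≅ M) :
    Nonempty (((singleFunctor A 0).obj M)⟦(-k)⟧ ≅ s) := by
  have h1 : s.IsGE k := (isGE_iff _ _).2 (fun i hi => hs i (by omega))
  have h2 : s.IsLE k := (isLE_iff _ _).2 (fun i hi => hs i (by omega))
  obtain ⟨Y, ⟨eY⟩⟩ := exists_iso_singleFunctor_obj_of_isGE_of_isLE s k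
  have eMY : M ≅ Y := e.symm ≪≫ (homologyFunctor A k).mapIso eY ≪≫
    (singleFunctorCompHomologyFunctorIso A k).app Y
  exact ⟨((singleFunctors A).shiftIso (-k) k 0 (by ring)).app M ≪≫
    (singleFunctor A k).mapIso eMY ≪≫ eY.symm⟩

lemma isIso_desc {x : DerivedCategory A} (a b : ℤ)
    (S : ((Finset.Icc a b : Finset ℤ) : Type) → DerivedCategory A)
    (hbdd : ∀ i : ℤ, i ∉ Finset.Icc a b → IsZero ((homologyFunctor A i).obj x))
    (hS : ∀ k : (Finset.Icc a b : Finset ℤ), Conc (k : ℤ) (S k)) (f : ∀ k, S k ⟶ x)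
    (hf : ∀ k : (Finset.Icc a b : Finset ℤ), IsIso ((homologyFunctor A (k : ℤ)).map (f k))) :
    IsIso (biproduct.desc f) := by
  rw [isIso_iff]
  intro j
  by_cases hj : j ∈ Finset.Icc a b
  · have h1 : IsIso ((homologyFunctor A j).map (biproduct.ι S ⟨j, hj⟩)) := by
      refine ⟨(homologyFunctor A j).map (biproduct.π S ⟨j, hj⟩), ?_, ?_⟩
      · rw [← Functor.map_comp]; simp
      · rw [← Functor.map_comp, ← CategoryTheory.Functor.map_id, ← biproduct.total, Functor.map_sum,
          Finset.sum_eq_single ⟨j, hj⟩]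
        · intro k _ hk
          rw [Functor.map_comp]
          exact (hS k j (fun h => hk (Subtype.ext h.symm))).eq_of_tgt
            ((homologyFunctor A j).map (biproduct.π S k)) 0 ▸ zero_comp
        · simp
    have h2 : IsIso ((homologyFunctor A j).map (biproduct.ι S ⟨j, hj⟩) ≫
        (homologyFunctor A j).map (biproduct.desc f)) := by
      rw [← Functor.map_comp, biproduct.ι_desc]
      exact hf ⟨j, hj⟩
    exact IsIso.of_isIso_comp_left ((homologyFunctor A j).map (biproduct.ι S ⟨j, hj⟩)) _
  · refine isIso_of_isZero _ ?_ (hbdd j hj)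
    rw [IsZero.iff_id_eq_zero, ← CategoryTheory.Functor.map_id, ← biproduct.total, Functor.map_sum]
    refine Finset.sum_eq_zero (fun k _ => ?_)
    rw [Functor.map_comp, (hS k j (fun h => hj (h ▸ k.2))).eq_of_tgt
      ((homologyFunctor A j).map (biproduct.π S k)) 0, zero_comp]

end helpers

theorem deligne_decomposition_criterion
    {x : DerivedCategory A} (u : x ⟶ x⟦(2 : ℤ)⟧) (n : ℤ) (a b : ℤ)
    (hbdd : ∀ i : ℤ, i ∉ Finset.Icc a b → IsZero ((homologyFunctor A i).obj x))
    (hiso : ∀ i : ℕ, IsIso (homologyPow u i (n - i) ≫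
      eqToHom (congrArg (fun t => (homologyFunctor A t).obj x)
        (show n - (i : ℤ) + 2 * (i : ℕ) = n + (i : ℤ) by ring)))) :
    Nonempty (x ≅ ⨁ fun i : (Finset.Icc a b : Finset ℤ) =>
      ((singleFunctor A 0).obj ((homologyFunctor A (i : ℤ)).obj x))⟦(-(i : ℤ))⟧) := by
  have hpow : ∀ i : ℕ, ∃ v : x ⟶ x⟦(2 * i : ℤ)⟧,
      IsIso ((homologyFunctor A (n - i)).map v) := by
    intro i
    obtain ⟨v, hv⟩ := exists_pow u i
    refine ⟨v, ?_⟩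
    have h := hiso i
    rw [← hv] at h
    refine isIso_of_shiftMap v (n - i) (n + i) (by ring) ?_
    rw [← shiftMap_congr v (n - i) (n - i + 2 * i) (n + i) (by ring) (by ring)]
    exact h
  have key := main_induction n ((n - a).toNat + (b - n).toNat + 1) x
    (fun j hj => hbdd j (by
      rw [Finset.mem_Icc]
      omega)) (fun i _ => hpow i)
  choose s f hs hf using key
  have e : ∀ k : (Finset.Icc a b : Finset ℤ), Nonempty
      (((singleFunctor A 0).obj ((homologyFunctor A (k : ℤ)).obj x))⟦(-(k : ℤ))⟧ ≅ s k) :=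
    fun k => (hs k).nonempty_iso _ (@asIso _ _ _ _ _ (hf k))
  have := isIso_desc a b (fun k => s k) hbdd (fun k => hs k) (fun k => f k) (fun k => hf k)
  exact ⟨(asIso (biproduct.desc (fun k : (Finset.Icc a b : Finset ℤ) => f k))).symm ≪≫
    biproduct.mapIso (fun k => (e k).some.symm)⟩
end

section
/- Let A be an abelian category and let x be an object of the bounded derived category D^b(A). Suppose that for every integer i there exists a morphism f_i : H^i(x)⟦-i⟧ → x in D^b(A) (where H^i(x) is regarded as a complex concentrated in degree 0) such that the map induced by f_i on i-th cohomology, H^i(f_i) : H^i(x) → H^i(x), is the identity. Then the morphism ⊕_i f_i : ⊕_i H^i(x)⟦-i⟧ → x is an isomorphism in D^b(A); in particular x ≅ ⊕_i H^i(x)⟦-i⟧. -/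
/-!
The key step in the proof of Proposition 3.1 of the paper (direction (2) ⇒ (1)):
if for every `i` there is a morphism `f i : H^i(x)⟦-i⟧ ⟶ x` inducing the identity on
`i`-th cohomology, then the sum of the `f i` is an isomorphism.
-/

open CategoryTheory CategoryTheory.Limits DerivedCategory

universe w v u

variable (A : Type u) [Category.{v} A] [Abelian A] [HasDerivedCategory.{w} A]

/-- The canonical isomorphism `H^0((singleFunctor A 0).obj M) ≅ M`. -/
noncomputable def singleH0Iso (M : A) :
    (homologyFunctor A 0).obj ((singleFunctor A 0).obj M) ≅ M :=
  (homologyFunctor A 0).mapIso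
      (((SingleFunctors.evaluation _ _ 0).mapIso (singleFunctorsPostcompQIso A)).app M) ≪≫
    (homologyFunctorFactors A 0).app ((CochainComplex.singleFunctor A 0).obj M) ≪≫
    (HomologicalComplex.homologyFunctorSingleIso A (ComplexShape.up ℤ) 0).app M

/-- The canonical isomorphism `H^i(M⟦-i⟧) ≅ M`, where `M` is regarded as a complex
concentrated in degree `0` and then shifted by `-i`. -/
noncomputable def singleShiftHomologyIso (M : A) (i : ℤ) :
    (homologyFunctor A i).obj (((singleFunctor A 0).obj M)⟦-i⟧) ≅ M :=
  ((homologyFunctor A 0).shiftIso (-i) i 0 (by ring)).app ((singleFunctor A 0).obj M) ≪≫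
    ((homologyFunctor A 0).isoShiftZero ℤ).app ((singleFunctor A 0).obj M) ≪≫
    singleH0Iso A M

/-- `H^n(M⟦-i⟧)` vanishes for `n ≠ i`. -/
lemma isZero_homology_single_shift (M : A) (i n : ℤ) (h : n ≠ i) :
    IsZero ((homologyFunctor A n).obj (((singleFunctor A 0).obj M)⟦-i⟧)) := by
  have e := ((homologyFunctor A 0).shiftIso (-i) n (n - i) (by ring)).app
    ((singleFunctor A 0).obj M)
  refine IsZero.of_iso ?_ e
  change IsZero ((homologyFunctor A (n - i)).obj ((singleFunctor A 0).obj M))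
  rcases lt_or_gt_of_ne h with h | h
  · exact isZero_of_isGE _ 0 _ (by omega)
  · exact isZero_of_isLE _ 0 _ (by omega)

theorem decomposition_of_sections
    {x : DerivedCategory A} (a b : ℤ)
    (hbdd : ∀ i : ℤ, i ∉ Finset.Icc a b → IsZero ((homologyFunctor A i).obj x))
    (f : ∀ i : ℤ, ((singleFunctor A 0).obj ((homologyFunctor A i).obj x))⟦(-i)⟧ ⟶ x)
    (hf : ∀ i : ℤ, (homologyFunctor A i).map (f i) =
      (singleShiftHomologyIso A ((homologyFunctor A i).obj x) i).hom) :
    IsIso (biproduct.desc (fun i : (Finset.Icc a b : Finset ℤ) => f (i : ℤ))) := by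
  rw [DerivedCategory.isIso_iff]
  intro n
  let F : ↥(Finset.Icc a b) → DerivedCategory A := fun i =>
    ((singleFunctor A 0).obj ((homologyFunctor A (i : ℤ)).obj x))⟦(-(i : ℤ))⟧
  have hterm : ∀ i : (Finset.Icc a b : Finset ℤ), n ≠ i →
      (homologyFunctor A n).map (biproduct.π F i ≫ biproduct.ι F i) = 0 := by
    intro i hi
    rw [Functor.map_comp]
    rw [(isZero_homology_single_shift A _ (i : ℤ) n hi).eq_zero_of_tgt
      ((homologyFunctor A n).map (biproduct.π F i)), zero_comp]
  have htot : ∑ i, (homologyFunctor A n).map (biproduct.π F i ≫ biproduct.ι F i) = 𝟙 _ := by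
    rw [← Functor.map_sum, biproduct.total, CategoryTheory.Functor.map_id]
  by_cases hn : n ∈ Finset.Icc a b
  · let k : (Finset.Icc a b : Finset ℤ) := ⟨n, hn⟩
    rw [Finset.sum_eq_single k (fun i _ hi => hterm i (fun h => hi (Subtype.ext h.symm)))
      (fun h => (h (Finset.mem_univ _)).elim)] at htot
    have hι : IsIso ((homologyFunctor A n).map (biproduct.ι F k)) := by
      refine ⟨(homologyFunctor A n).map (biproduct.π F k), ?_, ?_⟩
      · rw [← Functor.map_comp, biproduct.ι_π_self, CategoryTheory.Functor.map_id]
      · rw [← Functor.map_comp, htot]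
    have hcomp : (homologyFunctor A n).map (biproduct.ι F k) ≫ (homologyFunctor A n).map
        (biproduct.desc (fun i : (Finset.Icc a b : Finset ℤ) => f (i : ℤ))) =
        (singleShiftHomologyIso A ((homologyFunctor A n).obj x) n).hom := by
      rw [← hf n, ← Functor.map_comp, biproduct.ι_desc]
    have : IsIso ((homologyFunctor A n).map (biproduct.ι F k) ≫ (homologyFunctor A n).map
        (biproduct.desc (fun i : (Finset.Icc a b : Finset ℤ) => f (i : ℤ)))) := by
      rw [hcomp]; infer_instance
    exact IsIso.of_isIso_comp_left ((homologyFunctor A n).map (biproduct.ι F k)) _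
  · rw [Finset.sum_eq_zero (fun i _ => hterm i (fun h => hn (h ▸ i.2)))] at htot
    have h1 : IsZero ((homologyFunctor A n).obj (⨁ F)) := (IsZero.iff_id_eq_zero _).2 htot.symm
    exact isIso_of_source_target_iso_zero _ h1.isoZero (hbdd n hn).isoZero
end

section
/- Let R be a ring, let (A_j)_{j ∈ ℤ} be a family of R-modules which vanish for all but finitely many j, let u_j : A_j → A_{j+2} be R-linear maps, and let n be an integer. For i ≥ 0 and any j, write u^i : A_j → A_{j+2i} for the i-fold composite of the maps u. Assume that u^i : A_{n-i} → A_{n+i} is an isomorphism for every i ≥ 0. For i ≥ 0 define the primitive part P_{n-i} = ker(u^{i+1} : A_{n-i} → A_{n+i+2}). Then for every i ≥ 0 there are Lefschetz decompositions: A_{n-i} is the internal direct sum of the submodules u^k(P_{n-i-2k}) over k ≥ 0, and A_{n+i} is the internal direct sum of the submodules u^{k+i}(P_{n-i-2k}) over k ≥ 0. -/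
/-!
The Lefschetz (primitive) decomposition used in the proof of Theorem 3.2 of the paper,
for a family of modules `A j` with maps `u j : A j → A (j+2)` such that
`u^i : A (n-i) → A (n+i)` is an isomorphism for all `i ≥ 0`.
-/

variable {R : Type*} [Ring R]

/-- Transport of a module along an equality of indices. -/
def castHom (A : ℤ → Type*) [∀ j, AddCommGroup (A j)] [∀ j, Module R (A j)]
    {j j' : ℤ} (h : j = j') : A j →ₗ[R] A j' := by
  subst h; exact LinearMap.id

/-- The `i`-fold composite `u^i : A j → A (j + 2*i)` of the maps `u`. -/
def upow {A : ℤ → Type*} [∀ j, AddCommGroup (A j)] [∀ j, Module R (A j)]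
    (u : ∀ j, A j →ₗ[R] A (j + 2)) : (i : ℕ) → (j : ℤ) → (A j →ₗ[R] A (j + 2 * i))
  | 0, j => castHom A (by push_cast; ring)
  | (i + 1), j => (castHom A (by push_cast; ring)).comp ((upow u i (j + 2)).comp (u j))

/-- The primitive part `P (n - j) = ker (u^(j+1) : A (n-j) → A (n+j+2))`. -/
def prim {A : ℤ → Type*} [∀ j, AddCommGroup (A j)] [∀ j, Module R (A j)]
    (u : ∀ j, A j →ₗ[R] A (j + 2)) (n : ℤ) (j : ℕ) : Submodule R (A (n - j)) :=
  LinearMap.ker ((castHom A (show n - (j : ℤ) + 2 * ((j + 1 : ℕ) : ℤ) = n + j + 2 by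
    push_cast; ring)).comp (upow u (j + 1) (n - j)))

section helpers
variable {A : ℤ → Type*} [∀ j, AddCommGroup (A j)] [∀ j, Module R (A j)]

/-- `u^m` with free target index. -/
def lefU (u : ∀ j, A j →ₗ[R] A (j + 2)) (m : ℕ) {a b : ℤ} (h : a + 2 * (m : ℤ) = b) :
    A a →ₗ[R] A b := (castHom A h).comp (upow u m a)

theorem lefU_zero (u : ∀ j, A j →ₗ[R] A (j + 2)) {a : ℤ} (h : a + 2 * ((0 : ℕ) : ℤ) = a) (x : A a) :
    lefU u 0 h x = x := by
  have key : ∀ (b : ℤ) (h1 : a = b) (h2 : b = a), castHom (R := R) A h2 (castHom (R := R) A h1 x) = x := by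
    intro b h1 h2
    subst h1
    rfl
  exact key _ _ h

theorem lefU_succ (u : ∀ j, A j →ₗ[R] A (j + 2)) (m : ℕ) {a b : ℤ}
    (h : a + 2 * ((m + 1 : ℕ) : ℤ) = b) (h' : a + 2 + 2 * (m : ℤ) = b) (x : A a) :
    lefU u (m + 1) h x = lefU u m h' (u a x) := by
  subst h
  rfl

theorem lefU_comp (u : ∀ j, A j →ₗ[R] A (j + 2)) (m m' : ℕ) {a b c : ℤ}
    (h : a + 2 * (m : ℤ) = b) (h' : b + 2 * (m' : ℤ) = c)
    (h'' : a + 2 * ((m + m' : ℕ) : ℤ) = c) (x : A a) :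
    lefU u m' h' (lefU u m h x) = lefU u (m + m') h'' x := by
  induction m generalizing a with
  | zero =>
    obtain rfl : a = b := by simpa using h
    rw [lefU_zero]
    congr 1
    congr 1
    omega
  | succ m ih =>
    rw [lefU_succ u m h (by push_cast at h; linarith)]
    rw [ih _ (by push_cast at *; linarith)]
    have e : m + 1 + m' = (m + m') + 1 := by ring
    have := lefU_succ u (m + m') (a := a) (b := c) (by push_cast at *; linarith) (by push_cast at *; linarith) x
    rw [← this]
    congr 1
    congr 1
    exact e.symm

/-- The summand `u^k (P_{n-j})` placed in `A c`. -/
def lefT (u : ∀ j, A j →ₗ[R] A (j + 2)) (n : ℤ) (k j : ℕ) {c : ℤ} (h : n - (j : ℤ) + 2 * (k : ℤ) = c) :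
    Submodule R (A c) := Submodule.map (lefU u k h) (prim u n j)

theorem lefT_congr (u : ∀ j, A j →ₗ[R] A (j + 2)) (n : ℤ) {k k' j j' : ℕ} {c : ℤ}
    (hk : k = k') (hj : j = j')
    (h : n - (j : ℤ) + 2 * (k : ℤ) = c) (h' : n - (j' : ℤ) + 2 * (k' : ℤ) = c) :
    lefT u n k j h = lefT u n k' j' h' := by
  subst hk hj; rfl

theorem lefT_map (u : ∀ j, A j →ₗ[R] A (j + 2)) (n : ℤ) (k j m : ℕ) {c d : ℤ}
    (h : n - (j : ℤ) + 2 * (k : ℤ) = c) (h' : c + 2 * (m : ℤ) = d)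
    (h'' : n - (j : ℤ) + 2 * ((k + m : ℕ) : ℤ) = d) :
    (lefT u n k j h).map (lefU u m h') = lefT u n (k + m) j h'' := by
  unfold lefT
  rw [← Submodule.map_comp]
  congr 1
  ext x
  exact lefU_comp u k m h h' h'' x

theorem mem_lefT_zero (u : ∀ j, A j →ₗ[R] A (j + 2)) (n : ℤ) (j : ℕ)
    (h : n - (j : ℤ) + 2 * ((0 : ℕ) : ℤ) = n - j)
    (h' : n - (j : ℤ) + 2 * ((j + 1 : ℕ) : ℤ) = n + j + 2) (x : A (n - j)) :
    x ∈ lefT u n 0 j h ↔ lefU u (j + 1) h' x = 0 := by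
  unfold lefT
  rw [Submodule.mem_map]
  constructor
  · rintro ⟨y, hy, rfl⟩
    rw [lefU_zero]
    exact hy
  · intro hx
    exact ⟨x, hx, lefU_zero u h x⟩

/-- The summands of `A (n - i)`. -/
def lefQ (u : ∀ j, A j →ₗ[R] A (j + 2)) (n : ℤ) (i k : ℕ) : Submodule R (A (n - i)) :=
  lefT u n k (i + 2 * k) (by push_cast; ring)

theorem lefQ_succ (u : ∀ j, A j →ₗ[R] A (j + 2)) (n : ℤ) (i k : ℕ)
    (h : n - ((i + 2 : ℕ) : ℤ) + 2 * ((1 : ℕ) : ℤ) = n - i) :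
    lefQ u n i (k + 1) = (lefQ u n (i + 2) k).map (lefU u 1 h) := by
  unfold lefQ
  rw [lefT_map u n k (i + 2 + 2 * k) 1 _ h (by push_cast; ring)]
  exact lefT_congr u n rfl (by ring) _ _

theorem mem_lefQ_zero (u : ∀ j, A j →ₗ[R] A (j + 2)) (n : ℤ) (j : ℕ)
    (h' : n - (j : ℤ) + 2 * ((j + 1 : ℕ) : ℤ) = n + j + 2) (x : A (n - j)) :
    x ∈ lefQ u n j 0 ↔ lefU u (j + 1) h' x = 0 :=
  mem_lefT_zero u n j _ h' x

theorem lef_bij (u : ∀ j, A j →ₗ[R] A (j + 2)) (n : ℤ)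
    (hiso : ∀ i : ℕ, Function.Bijective (lefU u i (show n - (i : ℤ) + 2 * (i : ℕ) = n + i by ring)))
    (i : ℕ) (h : n - ((i + 2 : ℕ) : ℤ) + 2 * ((1 : ℕ) : ℤ) = n - i)
    (h' : n - (i : ℤ) + 2 * ((i + 1 : ℕ) : ℤ) = n + i + 2) :
    Function.Bijective (fun x => lefU u (i + 1) h' (lefU u 1 h x)) := by
  have key : ∀ (m : ℕ) (c : ℤ) (hm : m = i + 2) (hc : n - ((i + 2 : ℕ) : ℤ) + 2 * (m : ℤ) = c),
      Function.Bijective (lefU u m hc) := by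
    intro m c hm hc
    subst hm
    obtain rfl : n + ((i + 2 : ℕ) : ℤ) = c := by rw [← hc]; ring
    exact hiso (i + 2)
  have := key (1 + (i + 1)) (n + i + 2) (by ring) (by push_cast; ring)
  convert this using 2 with x
  exact lefU_comp u 1 (i + 1) h h' _ x

theorem lefQ_top (u : ∀ j, A j →ₗ[R] A (j + 2)) (n : ℤ)
    (hiso : ∀ i : ℕ, Function.Bijective (lefU u i (show n - (i : ℤ) + 2 * (i : ℕ) = n + i by ring)))
    (M : ℕ) (hM : ∀ i : ℕ, M ≤ i → ∀ a : A (n - i), a = 0) (N : ℕ) :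
    ∀ i : ℕ, M ≤ i + N → ⨆ k, lefQ u n i k = ⊤ := by
  induction N with
  | zero =>
    intro i hi
    rw [eq_top_iff]
    intro a _
    rw [hM i hi a]
    exact zero_mem _
  | succ N ih =>
    intro i hi
    rw [eq_top_iff]
    intro a _
    have h : n - ((i + 2 : ℕ) : ℤ) + 2 * ((1 : ℕ) : ℤ) = n - i := by push_cast; ring
    have h' : n - (i : ℤ) + 2 * ((i + 1 : ℕ) : ℤ) = n + i + 2 := by push_cast; ring
    obtain ⟨b, hb⟩ := (lef_bij u n hiso i h h').2 (lefU u (i + 1) h' a)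
    have h0 : a - lefU u 1 h b ∈ lefQ u n i 0 := by
      rw [mem_lefQ_zero u n i h', map_sub, sub_eq_zero]
      exact hb.symm
    have h1 : lefU u 1 h b ∈ ⨆ k, lefQ u n i k := by
      have hb' : lefU u 1 h b ∈ (⨆ k, lefQ u n (i + 2) k).map (lefU u 1 h) := by
        rw [ih (i + 2) (by omega)]
        exact Submodule.mem_map_of_mem trivial
      rw [Submodule.map_iSup] at hb'
      refine (iSup_le fun k => ?_ : _ ≤ ⨆ k, lefQ u n i k) hb'
      rw [← lefQ_succ]
      exact le_iSup (lefQ u n i) (k + 1)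
    have := add_mem (Submodule.mem_iSup_of_mem (p := lefQ u n i) 0 h0) h1
    simpa using this

theorem lefQ_indep_range (u : ∀ j, A j →ₗ[R] A (j + 2)) (n : ℤ)
    (hiso : ∀ i : ℕ, Function.Bijective (lefU u i (show n - (i : ℤ) + 2 * (i : ℕ) = n + i by ring)))
    (N : ℕ) : ∀ (i : ℕ) (v : ℕ → A (n - i)), (∀ k, v k ∈ lefQ u n i k) →
      ∑ k ∈ Finset.range N, v k = 0 → ∀ k < N, v k = 0 := by
  induction N with
  | zero => intro i v _ _ k hk; omega
  | succ N ih =>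
    intro i v hv hs
    have h : n - ((i + 2 : ℕ) : ℤ) + 2 * ((1 : ℕ) : ℤ) = n - i := by push_cast; ring
    have h' : n - (i : ℤ) + 2 * ((i + 1 : ℕ) : ℤ) = n + i + 2 := by push_cast; ring
    have hw : ∀ k, ∃ w ∈ lefQ u n (i + 2) k, lefU u 1 h w = v (k + 1) := by
      intro k
      have := hv (k + 1)
      rw [lefQ_succ u n i k h] at this
      exact this
    choose w hwm hwe using hw
    rw [Finset.sum_range_succ'] at hs
    simp only [← hwe] at hs
    rw [← map_sum] at hs
    have h0 := (mem_lefQ_zero u n i h' _).1 (hv 0)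
    have hz : ∑ k ∈ Finset.range N, w k = 0 := by
      apply (lef_bij u n hiso i h h').1
      have := congrArg (lefU u (i + 1) h') hs
      rw [map_add, h0, add_zero, map_zero] at this
      simpa using this
    have hwz := ih (i + 2) w hwm hz
    intro k hk
    cases k with
    | zero => rw [hz, map_zero, zero_add] at hs; exact hs
    | succ k => rw [← hwe, hwz k (by omega), map_zero]

theorem lefQ_indep (u : ∀ j, A j →ₗ[R] A (j + 2)) (n : ℤ)
    (hiso : ∀ i : ℕ, Function.Bijective (lefU u i (show n - (i : ℤ) + 2 * (i : ℕ) = n + i by ring)))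
    (i : ℕ) : iSupIndep (lefQ u n i) := by
  classical
  rw [iSupIndep_iff_finsetSum_eq_zero_imp_eq_zero]
  intro s v hv hs k hk
  obtain ⟨N, hN⟩ := s.exists_nat_subset_range
  have := lefQ_indep_range u n hiso N i (fun k => if k ∈ s then v k else 0)
    (by intro k; split_ifs with hks
        · exact hv k hks
        · exact zero_mem _)
    (by rw [Finset.sum_ite_mem, Finset.inter_eq_right.2 hN]; exact hs) k
    (Finset.mem_range.1 (hN hk))
  simpa [hk] using this

end helpers

theorem lefschetz_decomposition
    {A : ℤ → Type*} [∀ j, AddCommGroup (A j)] [∀ j, Module R (A j)]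
    (hfin : {j : ℤ | ∃ a : A j, a ≠ 0}.Finite)
    (u : ∀ j, A j →ₗ[R] A (j + 2)) (n : ℤ)
    (hiso : ∀ i : ℕ, Function.Bijective ((castHom A
      (show n - (i : ℤ) + 2 * (i : ℕ) = n + i by push_cast; ring)).comp (upow u i (n - i))))
    (i : ℕ) :
    DirectSum.IsInternal (fun k : ℕ =>
      Submodule.map ((castHom A (show n - ((i + 2 * k : ℕ) : ℤ) + 2 * (k : ℕ) = n - i by
          push_cast; ring)).comp (upow u k (n - ((i + 2 * k : ℕ) : ℤ))))
        (prim u n (i + 2 * k))) ∧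
    DirectSum.IsInternal (fun k : ℕ =>
      Submodule.map ((castHom A (show n - ((i + 2 * k : ℕ) : ℤ) + 2 * ((k + i : ℕ) : ℤ) = n + i by
          push_cast; ring)).comp (upow u (k + i) (n - ((i + 2 * k : ℕ) : ℤ))))
        (prim u n (i + 2 * k))) := by
  classical
  have hiso' : ∀ i : ℕ, Function.Bijective
      (lefU u i (show n - (i : ℤ) + 2 * (i : ℕ) = n + i by ring)) := hiso
  obtain ⟨M, hM⟩ : ∃ M : ℕ, ∀ i : ℕ, M ≤ i → ∀ a : A (n - i), a = 0 := by
    obtain ⟨b, hb⟩ := hfin.bddBelow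
    refine ⟨(n - b).toNat + 1, fun i hi a => ?_⟩
    by_contra ha
    have := hb (show n - (i : ℤ) ∈ {j : ℤ | ∃ a : A j, a ≠ 0} from ⟨a, ha⟩)
    omega
  have hind := lefQ_indep u n hiso' i
  have htop := lefQ_top u n hiso' M hM M i (by omega)
  constructor
  · exact (DirectSum.isInternal_submodule_iff_iSupIndep_and_iSup_eq_top (lefQ u n i)).2
      ⟨hind, htop⟩
  · let e := LinearEquiv.ofBijective _ (hiso' i)
    have hmap : ∀ k, lefT u n (k + i) (i + 2 * k) (by push_cast; ring) =
        Submodule.orderIsoMapComap e (lefQ u n i k) := fun k =>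
      (lefT_map u n k (i + 2 * k) i (by push_cast; ring) (by ring) (by push_cast; ring)).symm
    have hfun : (fun k => lefT u n (k + i) (i + 2 * k) (by push_cast; ring)) =
        Submodule.orderIsoMapComap e ∘ lefQ u n i := funext hmap
    refine (DirectSum.isInternal_submodule_iff_iSupIndep_and_iSup_eq_top
      (fun k => lefT u n (k + i) (i + 2 * k) (c := n + i) (by push_cast; ring))).2 ?_
    rw [hfun]
    refine ⟨(iSupIndep_map_orderIso_iff _).2 hind, ?_⟩
    have := (Submodule.orderIsoMapComap e).map_iSup (lefQ u n i)
    rw [htop, OrderIso.map_top] at this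
    exact this.symm
end
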